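/- In any nondegenerate triangle, the distance from the circumcenter X3 to the incenter X1 and the distance from X3 to the Gergonne point X7 satisfy ((7 + 4√2)/17)·dist(X3, X7) ≤ dist(X3, X1) ≤ dist(X3, X7). -/

import Mathlib

/-- The point with normalized barycentric coordinates `(x : y : z)`
with respect to the triangle `A B C`. -/
noncomputable def bary (A B C : EuclideanSpace ℝ (Fin 2)) (x y z : ℝ) :
    EuclideanSpace ℝ (Fin 2) :=
  (x + y + z)⁻¹ • (x • A + y • B + z • C)

/-- The triangle center with barycentric coordinates
`(f a b c : f b c a : f c a b)` where `a, b, c` are the side lengths. -/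
noncomputable def tcenter (f : ℝ → ℝ → ℝ → ℝ) (A B C : EuclideanSpace ℝ (Fin 2)) :
    EuclideanSpace ℝ (Fin 2) :=
  bary A B C (f (dist B C) (dist C A) (dist A B))
    (f (dist C A) (dist A B) (dist B C))
    (f (dist A B) (dist B C) (dist C A))

lemma core_pq (p q : ℝ) (hp : 0 < p) (hq : 0 < q) (h8 : 8 * q ≤ 1)
    (hdisc : 0 ≤ 4 * p * ((1 + q)^2 + 18 * q * (1 + q) - 27 * q^2) - 256 * q * (1 + q)^3 - p^2)
    (h3 : 3 * p ≤ 16 * (1 + q)^2) :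
    1 - p * q * (1 + 4 * q) / (1 + q)^2 ≤ (7 - 4 * Real.sqrt 2)^2 * (1 - 8 * q) ∧
    1 - 8 * q ≤ 1 - p * q * (1 + 4 * q) / (1 + q)^2 := by
  have hs : Real.sqrt 2 ^ 2 = 2 := Real.sq_sqrt (by norm_num)
  constructor
  · obtain ⟨d, hd0, hd⟩ : ∃ d : ℝ, 0 ≤ d ∧ d^2 = 1 - 8 * q :=
      ⟨Real.sqrt (1 - 8 * q), Real.sqrt_nonneg _, Real.sq_sqrt (by linarith)⟩
    have hd1 : d < 1 := by nlinarith
    have hqd : q = (1 - d^2) / 8 := by linarith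
    subst hqd
    have hm : (1 - d) * (3 + d)^3 / 4 ≤ p := by
      by_contra hcon
      push Not at hcon
      have hmM : (1 - d) * (3 + d)^3 / 4 ≤ (1 + d) * (3 - d)^3 / 4 := by
        have : (1 + d) * (3 - d)^3 / 4 - (1 - d) * (3 + d)^3 / 4 = 4 * d^3 := by ring
        have : 0 ≤ d^3 := by positivity
        linarith
      have hf : (p - (1 - d) * (3 + d)^3 / 4) * ((1 + d) * (3 - d)^3 / 4 - p) < 0 :=
        mul_neg_of_neg_of_pos (by linarith) (by linarith)
      apply absurd hdisc
      push Not
      refine lt_of_eq_of_lt ?_ hf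
      ring
    have h3d : 0 < 3 - d := by linarith
    have e1 : ((4 - d - d^2) / (3 - d)) ≤ 7 - 4 * Real.sqrt 2 := by
      rw [div_le_iff₀ h3d]
      nlinarith [sq_nonneg (d - (3 - 2 * Real.sqrt 2))]
    have e0 : 0 ≤ (4 - d - d^2) / (3 - d) := div_nonneg (by nlinarith) h3d.le
    have e2 := pow_le_pow_left₀ e0 e1 2
    have hc : 0 ≤ (1 - d^2) / 8 * (1 + 4 * ((1 - d^2) / 8)) / (1 + (1 - d^2) / 8)^2 := by
      have : 0 < 1 - d^2 := by nlinarith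
      positivity
    have e3 := mul_le_mul_of_nonneg_right hm hc
    have e4 : 1 - (1 - d) * (3 + d)^3 / 4 *
        ((1 - d^2) / 8 * (1 + 4 * ((1 - d^2) / 8)) / (1 + (1 - d^2) / 8)^2)
        = ((4 - d - d^2) / (3 - d))^2 * d^2 := by
      have h1 : (1 + (1 - d^2) / 8) = (3 - d) * (3 + d) / 8 := by ring
      have h2 : 3 + d ≠ 0 := by positivity
      rw [h1]
      have := h3d.ne'
      field_simp
      ring
    have e5 := mul_le_mul_of_nonneg_right e2 (sq_nonneg d)
    rw [← hd]
    calc _ = 1 - p * ((1 - d^2) / 8 * (1 + 4 * ((1 - d^2) / 8)) / (1 + (1 - d^2) / 8)^2) := by ring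
      _ ≤ _ := by linarith
  · have : p * q * (1 + 4 * q) / (1 + q)^2 ≤ 8 * q := by
      rw [div_le_iff₀ (by positivity)]
      have h : p * (1 + 4 * q) ≤ 8 * (1 + q)^2 := by nlinarith
      nlinarith
    linarith

lemma core_uvw (u v w : ℝ) (hu : 0 < u) (hv : 0 < v) (hw : 0 < w) :
    ∃ D G R : ℝ, 0 ≤ R ∧ G ≤ (7 - 4 * Real.sqrt 2)^2 * D ∧ D ≤ G ∧
      R = ((u + v) * (v + w) * (w + u))^2 / (16 * ((u + v + w) * (u * v * w))) ∧
      R * D = R - (u + v) * (v + w) * (w + u) / (2 * (u + v + w)) ∧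
      R * G = R - u * v * w * ((u + v + w) * (u * v + v * w + w * u) + 3 * (u * v * w)) /
        (u * v + v * w + w * u)^2 := by
  obtain ⟨P, hP⟩ : ∃ P, P = (u + v) * (v + w) * (w + u) := ⟨_, rfl⟩
  obtain ⟨e1, h1⟩ : ∃ P, P = u + v + w := ⟨_, rfl⟩
  obtain ⟨e2, h2⟩ : ∃ P, P = u * v + v * w + w * u := ⟨_, rfl⟩
  obtain ⟨e3, h3⟩ : ∃ P, P = u * v * w := ⟨_, rfl⟩
  have p1 : 0 < e1 := by rw [h1]; positivity
  have p2 : 0 < e2 := by rw [h2]; positivity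
  have p3 : 0 < e3 := by rw [h3]; positivity
  have pP : 0 < P := by rw [hP]; positivity
  have hPe : P = e1 * e2 - e3 := by rw [hP, h1, h2, h3]; ring
  have hdisc : 0 ≤ e1^2 * e2^2 - 4 * e2^3 - 4 * e1^3 * e3 + 18 * e1 * e2 * e3 - 27 * e3^2 := by
    have := sq_nonneg ((u - v) * (v - w) * (w - u))
    refine le_of_le_of_eq this ?_
    rw [h1, h2, h3]; ring
  have hN : 3 * e1 * e3 ≤ e2^2 := by
    rw [h1, h2, h3]
    nlinarith [sq_nonneg (u * v - v * w), sq_nonneg (v * w - w * u), sq_nonneg (w * u - u * v)]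
  have h8 : 8 * e3 ≤ P := by
    rw [hP, h3]
    nlinarith [mul_nonneg hu.le (sq_nonneg (v - w)), mul_nonneg hv.le (sq_nonneg (u - w)),
      mul_nonneg hw.le (sq_nonneg (u - v))]
  rw [← hP, ← h1, ← h2, ← h3]
  have h12 : e2 = (P + e3) / e1 := by field_simp; linarith
  have hpe : 0 < P + e3 := by positivity
  have key := core_pq (16 * e1^3 * e3 / P^2) (e3 / P) (by positivity) (by positivity)
    (by rw [← mul_div_assoc, div_le_one pP]; exact h8)
    (by
      have : 0 ≤ (64 * e1^3 * e3 / P^4) * (e1^2 * e2^2 - 4 * e2^3 - 4 * e1^3 * e3 + 18 * e1 * e2 * e3 - 27 * e3^2) :=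
        mul_nonneg (by positivity) hdisc
      refine le_of_le_of_eq this ?_
      rw [h12]
      field_simp
      ring)
    (by
      have : 0 ≤ (16 * e1^2 / P^2) * (e2^2 - 3 * e1 * e3) :=
        mul_nonneg (by positivity) (by linarith)
      rw [← sub_nonneg]
      refine le_of_le_of_eq this ?_
      rw [h12]
      field_simp)
  refine ⟨_, _, P^2 / (16 * (e1 * e3)), by positivity, key.1, key.2, rfl, ?_, ?_⟩
  · field_simp
    ring
  · rw [h12]
    have : 1 + e3 / P = (P + e3) / P := by field_simp
    rw [this]
    field_simp
    ring

lemma dist_bary_sq (A B C : EuclideanSpace ℝ (Fin 2)) (x y z x' y' z' : ℝ)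
    (hs : x + y + z ≠ 0) (hs' : x' + y' + z' ≠ 0) :
    dist (bary A B C x y z) (bary A B C x' y' z')^2 =
      -((dist B C)^2 * (y / (x + y + z) - y' / (x' + y' + z')) * (z / (x + y + z) - z' / (x' + y' + z'))
       + (dist C A)^2 * (z / (x + y + z) - z' / (x' + y' + z')) * (x / (x + y + z) - x' / (x' + y' + z'))
       + (dist A B)^2 * (x / (x + y + z) - x' / (x' + y' + z')) * (y / (x + y + z) - y' / (x' + y' + z'))) := by
  obtain ⟨α, hα⟩ : ∃ α, α = x / (x + y + z) - x' / (x' + y' + z') := ⟨_, rfl⟩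
  obtain ⟨β, hβ⟩ : ∃ α, α = y / (x + y + z) - y' / (x' + y' + z') := ⟨_, rfl⟩
  obtain ⟨γ, hγ⟩ : ∃ α, α = z / (x + y + z) - z' / (x' + y' + z') := ⟨_, rfl⟩
  have hsum : γ = - α - β := by rw [hα, hβ, hγ]; field_simp; ring
  have hc : ∀ i, bary A B C x y z i - bary A B C x' y' z' i = α * A i + β * B i + γ * C i := by
    intro i
    simp only [bary, PiLp.smul_apply, PiLp.add_apply, smul_eq_mul]
    rw [hα, hβ, hγ]
    ring
  rw [← hα, ← hβ, ← hγ]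
  simp only [EuclideanSpace.dist_eq, Fin.sum_univ_two, Real.dist_eq, sq_abs]
  rw [Real.sq_sqrt (by positivity), Real.sq_sqrt (by positivity), Real.sq_sqrt (by positivity),
    Real.sq_sqrt (by positivity), hc, hc, hsum]
  ring

lemma tri_pos (A B C : EuclideanSpace ℝ (Fin 2)) (h : AffineIndependent ℝ ![A, B, C]) :
    ∃ u v w : ℝ, 0 < u ∧ 0 < v ∧ 0 < w ∧ dist B C = v + w ∧ dist C A = w + u ∧ dist A B = u + v := by
  have hdet : (B 0 - A 0) * (C 1 - A 1) - (B 1 - A 1) * (C 0 - A 0) ≠ 0 := by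
    intro h0
    rw [affineIndependent_iff_not_collinear_set] at h
    apply h
    by_cases hAB : A = B
    · subst hAB
      simpa using collinear_pair ℝ A C
    rw [collinear_iff_of_mem (p₀ := A) (by simp)]
    refine ⟨B - A, ?_⟩
    have hn : (B 0 - A 0)^2 + (B 1 - A 1)^2 ≠ 0 := by
      intro hz
      apply hAB
      ext i
      fin_cases i
      · show A 0 = B 0
        nlinarith [sq_nonneg (B 0 - A 0), sq_nonneg (B 1 - A 1)]
      · show A 1 = B 1
        nlinarith [sq_nonneg (B 0 - A 0), sq_nonneg (B 1 - A 1)]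
    intro p hp
    simp only [Set.mem_insert_iff, Set.mem_singleton_iff] at hp
    rcases hp with rfl | rfl | rfl
    · exact ⟨0, by simp⟩
    · exact ⟨1, by simp⟩
    · refine ⟨((B 0 - A 0) * (p 0 - A 0) + (B 1 - A 1) * (p 1 - A 1)) / ((B 0 - A 0)^2 + (B 1 - A 1)^2), ?_⟩
      ext i
      fin_cases i
      · simp
        field_simp
        linear_combination (-(B 1 - A 1)) * h0
      · simp
        field_simp
        linear_combination (B 0 - A 0) * h0
  have ha : dist B C ^ 2 = (B 0 - C 0)^2 + (B 1 - C 1)^2 := by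
    simp only [EuclideanSpace.dist_eq, Fin.sum_univ_two, Real.dist_eq, sq_abs]
    rw [Real.sq_sqrt (by positivity)]
  have hb : dist C A ^ 2 = (C 0 - A 0)^2 + (C 1 - A 1)^2 := by
    simp only [EuclideanSpace.dist_eq, Fin.sum_univ_two, Real.dist_eq, sq_abs]
    rw [Real.sq_sqrt (by positivity)]
  have hc : dist A B ^ 2 = (A 0 - B 0)^2 + (A 1 - B 1)^2 := by
    simp only [EuclideanSpace.dist_eq, Fin.sum_univ_two, Real.dist_eq, sq_abs]
    rw [Real.sq_sqrt (by positivity)]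
  have t1 : dist B C ≤ dist C A + dist A B := by
    have := dist_triangle B A C
    rw [dist_comm B A, dist_comm A C] at this; linarith
  have t2 : dist C A ≤ dist A B + dist B C := by
    have := dist_triangle C B A
    rw [dist_comm C B, dist_comm B A] at this; linarith
  have t3 : dist A B ≤ dist B C + dist C A := by
    have := dist_triangle A C B
    rw [dist_comm A C, dist_comm C B] at this; linarith
  generalize dist B C = a at *
  generalize dist C A = b at *
  generalize dist A B = c at *
  have hprod : (a + b + c) * (b + c - a) * (c + a - b) * (a + b - c) =
      4 * ((B 0 - A 0) * (C 1 - A 1) - (B 1 - A 1) * (C 0 - A 0))^2 := by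
    have : (a + b + c) * (b + c - a) * (c + a - b) * (a + b - c) =
      4 * b^2 * c^2 - (b^2 + c^2 - a^2)^2 := by ring
    rw [this, ha, hb, hc]; ring
  have hne : (a + b + c) * (b + c - a) * (c + a - b) * (a + b - c) ≠ 0 := by
    rw [hprod]; positivity
  simp only [mul_ne_zero_iff] at hne
  obtain ⟨⟨⟨_, n1⟩, n2⟩, n3⟩ := hne
  have q1 : 0 < b + c - a := lt_of_le_of_ne (by linarith) n1.symm
  have q2 : 0 < c + a - b := lt_of_le_of_ne (by linarith) n2.symm
  have q3 : 0 < a + b - c := lt_of_le_of_ne (by linarith) n3.symm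
  exact ⟨(b + c - a) / 2, (c + a - b) / 2, (a + b - c) / 2, by linarith, by linarith, by linarith,
    by ring, by ring, by ring⟩

lemma le_of_sq_le_sq_aux {x y : ℝ} (hy : 0 ≤ y) (h : x^2 ≤ y^2) : x ≤ y :=
  (le_abs_self x).trans (abs_le_of_sq_le_sq h hy)

theorem stmt_14 (A B C : EuclideanSpace ℝ (Fin 2))
    (h : AffineIndependent ℝ ![A, B, C]) :
    ((7 + 4 * Real.sqrt 2)/17) * dist (tcenter (fun a b c => a^2*(a^2 - b^2 - c^2)) A B C) (tcenter (fun a b c => (a + b - c)*(a - b + c)) A B C) ≤ dist (tcenter (fun a b c => a^2*(a^2 - b^2 - c^2)) A B C) (tcenter (fun a b c => a) A B C) ∧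
      dist (tcenter (fun a b c => a^2*(a^2 - b^2 - c^2)) A B C) (tcenter (fun a b c => a) A B C) ≤ dist (tcenter (fun a b c => a^2*(a^2 - b^2 - c^2)) A B C) (tcenter (fun a b c => (a + b - c)*(a - b + c)) A B C) := by
  obtain ⟨u, v, w, hu, hv, hw, ha, hb, hc⟩ := tri_pos A B C h
  obtain ⟨D, G, R, hR, hG, hD, hRe, hRD, hRG⟩ := core_uvw u v w hu hv hw
  have hO : (v + w)^2 * ((v + w)^2 - (w + u)^2 - (u + v)^2) +
      (w + u)^2 * ((w + u)^2 - (u + v)^2 - (v + w)^2) +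
      (u + v)^2 * ((u + v)^2 - (v + w)^2 - (w + u)^2) = -(16 * ((u + v + w) * (u * v * w))) := by ring
  have hOn : -(16 * ((u + v + w) * (u * v * w))) ≠ 0 := by
    have : 0 < 16 * ((u + v + w) * (u * v * w)) := by positivity
    linarith
  have hI : (v + w) + (w + u) + (u + v) = 2 * (u + v + w) := by ring
  have hK : (v + w + (w + u) - (u + v)) * (v + w - (w + u) + (u + v)) +
      (w + u + (u + v) - (v + w)) * (w + u - (u + v) + (v + w)) +
      (u + v + (v + w) - (w + u)) * (u + v - (v + w) + (w + u)) = 4 * (u * v + v * w + w * u) := by ring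
  have dI : dist (tcenter (fun a b c => a^2*(a^2 - b^2 - c^2)) A B C) (tcenter (fun a b c => a) A B C)^2
      = R * D := by
    unfold tcenter
    simp only []
    rw [dist_bary_sq, ha, hb, hc, hRD, hRe, hO, hI]
    · field_simp
      ring
    · rw [ha, hb, hc, hO]; exact hOn
    · rw [ha, hb, hc, hI]; positivity
  have dG : dist (tcenter (fun a b c => a^2*(a^2 - b^2 - c^2)) A B C)
      (tcenter (fun a b c => (a + b - c)*(a - b + c)) A B C)^2 = R * G := by
    unfold tcenter
    simp only []
    rw [dist_bary_sq, ha, hb, hc, hRG, hRe, hO, hK]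
    · field_simp
      ring
    · rw [ha, hb, hc, hO]; exact hOn
    · rw [ha, hb, hc, hK]; positivity
  have hs : Real.sqrt 2 ^ 2 = 2 := Real.sq_sqrt (by norm_num)
  have hs0 := Real.sqrt_nonneg 2
  constructor
  · apply le_of_sq_le_sq_aux dist_nonneg
    rw [mul_pow, dG, dI]
    have h1 := mul_le_mul_of_nonneg_left hG hR
    have h2 := mul_le_mul_of_nonneg_left h1 (sq_nonneg ((7 + 4 * Real.sqrt 2)/17))
    refine h2.trans_eq ?_
    have : (7 + 4 * Real.sqrt 2)/17 * (7 - 4 * Real.sqrt 2) = 1 := by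
      linear_combination (-16/17) * hs
    calc _ = ((7 + 4 * Real.sqrt 2)/17 * (7 - 4 * Real.sqrt 2))^2 * (R * D) := by ring
      _ = _ := by rw [this]; ring
  · apply le_of_sq_le_sq_aux dist_nonneg
    rw [dG, dI]
    exact mul_le_mul_of_nonneg_left hD hR
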